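/- The mediation formula identifies the organic direct effect: under consistency, positivity, exchangeability, and the organic-intervention conditions on (M^{1,I}, Y^{1,I}), one has E[Y^{1,I}] − E[Y^0] = Ψ(P), where Ψ(P) is the mediation formula. -/

import Mathlib

open Classical

noncomputable section

/-- Probability of the event `S` under the probability mass function `P`
on a finite sample space. -/
def pr {Ω : Type} [Fintype Ω] (P : Ω → ℝ) (S : Ω → Prop) : ℝ :=
  ∑ ω, if S ω then P ω else 0

/-- Conditional probability of `S` given `T`, with the convention that it is `0`
when the conditioning event is null (in Lean, `x / 0 = 0`). -/
def cpr {Ω : Type} [Fintype Ω] (P : Ω → ℝ) (S T : Ω → Prop) : ℝ :=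
  pr P (fun ω => S ω ∧ T ω) / pr P T

/-- Expectation of `X` under `P`. -/
def expec {Ω : Type} [Fintype Ω] (P : Ω → ℝ) (X : Ω → ℝ) : ℝ :=
  ∑ ω, X ω * P ω

/-- Conditional expectation of `X` given the event `T`, with the convention that
it is `0` when the conditioning event is null. -/
def cexp {Ω : Type} [Fintype Ω] (P : Ω → ℝ) (X : Ω → ℝ) (T : Ω → Prop) : ℝ :=
  (∑ ω, if T ω then X ω * P ω else 0) / pr P T

/-- The mediation formula
`Ψ(P) = Σ_m Σ_l ( E[Y|M=m,A=1,L=l] − E[Y|M=m,A=0,L=l] ) · P(M=m|A=0,L=l) · P(L=l)`. -/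
def medForm {Ω Lt Mt : Type} [Fintype Ω] [Fintype Lt] [Fintype Mt]
    (P : Ω → ℝ) (Lv : Ω → Lt) (A : Ω → Fin 2) (M : Ω → Mt) (Y : Ω → ℝ) : ℝ :=
  ∑ m, ∑ l,
    (cexp P Y (fun ω => M ω = m ∧ A ω = 1 ∧ Lv ω = l)
      - cexp P Y (fun ω => M ω = m ∧ A ω = 0 ∧ Lv ω = l))
    * cpr P (fun ω => M ω = m) (fun ω => A ω = 0 ∧ Lv ω = l)
    * pr P (fun ω => Lv ω = l)

/-!
Write `θ(a, a') = Σ_m Σ_l E[Y | M=m, A=a, L=l] · P(M=m | A=a', L=l) · P(L=l)`. Consistency and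
exchangeability turn the observed factors into `E[Y^a | M^a=m, L=l]` and `P(M^{a'}=m | L=l)`. For an
organic intervention these are `E[Y^{a,I} | M^{a,I}=m, L=l]` and `P(M^{a,I}=m | L=l)`, so the law of
total expectation gives `E[Y^{a,I}] = θ(a, a')`. Not intervening on the mediator at all is the
special case `a = a'`, so `E[Y^{a'}] = θ(a', a')`, and `Ψ(P) = θ(1, 0) - θ(0, 0)`.
-/

section FiniteProbability

variable {V W : Type*} {Ω : Type} [Fintype Ω] {P : Ω → ℝ} {S T U : Ω → Prop} {X X' : Ω → ℝ}

theorem pr_nonneg (hP : ∀ ω, 0 ≤ P ω) (T : Ω → Prop) : 0 ≤ pr P T :=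
  Finset.sum_nonneg fun ω _ => ite_nonneg (hP ω) le_rfl

theorem cpr_nonneg (hP : ∀ ω, 0 ≤ P ω) (S T : Ω → Prop) : 0 ≤ cpr P S T :=
  div_nonneg (pr_nonneg hP _) (pr_nonneg hP _)

theorem eq_zero_of_pr_eq_zero (hP : ∀ ω, 0 ≤ P ω) (hT : pr P T = 0) {ω : Ω} (hω : T ω) :
    P ω = 0 := by
  have hterm := (Fintype.sum_eq_zero_iff_of_nonneg
    (f := fun ω => if T ω then P ω else 0) fun ω => ite_nonneg (hP ω) le_rfl).1 hT
  simpa [hω] using congrFun hterm ω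

theorem pr_and_eq_zero (hP : ∀ ω, 0 ≤ P ω) (hT : pr P T = 0) (S : Ω → Prop) :
    pr P (fun ω => S ω ∧ T ω) = 0 :=
  Finset.sum_eq_zero fun _ _ => by
    split_ifs with hω
    exacts [eq_zero_of_pr_eq_zero hP hT hω.2, rfl]

theorem pr_ne_zero_of_cpr_ne_zero (h : cpr P S T ≠ 0) : pr P T ≠ 0 :=
  fun hT => h (by rw [cpr, hT, div_zero])

theorem pr_and_ne_zero_of_cpr_ne_zero (h : cpr P S T ≠ 0) : pr P (fun ω => S ω ∧ T ω) ≠ 0 :=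
  fun hST => h (by rw [cpr, hST, zero_div])

theorem cpr_mul_pr (hP : ∀ ω, 0 ≤ P ω) (S T : Ω → Prop) :
    cpr P S T * pr P T = pr P (fun ω => S ω ∧ T ω) :=
  div_mul_cancel_of_imp fun hT => pr_and_eq_zero hP hT S

theorem cexp_mul_pr (hP : ∀ ω, 0 ≤ P ω) (X : Ω → ℝ) (T : Ω → Prop) :
    cexp P X T * pr P T = ∑ ω, if T ω then X ω * P ω else 0 :=
  div_mul_cancel_of_imp fun hT => Finset.sum_eq_zero fun _ _ =>
    ite_eq_right_iff.2 fun hω => by rw [eq_zero_of_pr_eq_zero hP hT hω, mul_zero]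

theorem cexp_congr (hST : ∀ ω, S ω ↔ T ω) (hX : ∀ ω, T ω → X ω = X' ω) :
    cexp P X S = cexp P X' T := by
  obtain rfl : S = T := funext fun ω => propext (hST ω)
  refine congrArg (· / pr P S) (Finset.sum_congr rfl fun ω _ => ?_)
  exact if_ctx_congr Iff.rfl (fun hω => by rw [hX ω hω]) fun _ => rfl

theorem cpr_eq_cexp_ite (P : Ω → ℝ) (S T : Ω → Prop) :
    cpr P S T = cexp P (fun ω => if S ω then 1 else 0) T := by
  refine congrArg (· / pr P T) (Finset.sum_congr rfl fun ω _ => ?_)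
  by_cases hS : S ω <;> simp [hS]

theorem cexp_and (hT : pr P T ≠ 0) (X : Ω → ℝ) (S : Ω → Prop) :
    cexp P X (fun ω => S ω ∧ T ω) = cexp P (fun ω => if S ω then X ω else 0) T / cpr P S T := by
  rw [cexp, cexp, cpr, div_div_div_cancel_right₀ hT]
  refine congrArg (· / _) (Finset.sum_congr rfl fun ω _ => ?_)
  by_cases hS : S ω <;> simp [hS]

theorem cpr_and_right_of_condIndep (hT : cpr P T U ≠ 0)
    (h : cpr P (fun ω => S ω ∧ T ω) U = cpr P S U * cpr P T U) :
    cpr P S (fun ω => T ω ∧ U ω) = cpr P S U := by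
  have hU := pr_ne_zero_of_cpr_ne_zero hT
  calc cpr P S (fun ω => T ω ∧ U ω)
      = cpr P (fun ω => S ω ∧ T ω) U / cpr P T U := by
        simp only [cpr, div_div_div_cancel_right₀ hU, and_assoc]
    _ = cpr P S U := by rw [h, mul_div_cancel_right₀ _ hT]

theorem cexp_comp_eq_sum (P : Ω → ℝ) (g : Ω → V) (f : V → ℝ) (T : Ω → Prop) :
    cexp P (fun ω => f (g ω)) T
      = ∑ v ∈ Finset.univ.image g, f v * cpr P (fun ω => g ω = v) T := by
  simp only [cexp, cpr, pr, ← mul_div_assoc, ← Finset.sum_div, Finset.mul_sum]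
  rw [Finset.sum_comm]
  simp [ite_and]

theorem cexp_comp_congr {g : Ω → V}
    (h : ∀ v, cpr P (fun ω => g ω = v) S = cpr P (fun ω => g ω = v) T) (f : V → ℝ) :
    cexp P (fun ω => f (g ω)) S = cexp P (fun ω => f (g ω)) T := by
  simp only [cexp_comp_eq_sum, h]

theorem expec_eq_sum_cexp_mul_pr [Fintype V] (hP : ∀ ω, 0 ≤ P ω) (X : Ω → ℝ) (g : Ω → V) :
    expec P X = ∑ v, cexp P X (fun ω => g ω = v) * pr P (fun ω => g ω = v) := by
  simp only [cexp_mul_pr hP]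
  rw [Finset.sum_comm]
  simp [expec]

theorem expec_eq_sum_cexp_mul_cpr_mul_pr [Fintype V] [Fintype W] (hP : ∀ ω, 0 ≤ P ω)
    (X : Ω → ℝ) (g : Ω → V) (h : Ω → W) :
    expec P X = ∑ v, ∑ w, cexp P X (fun ω => g ω = v ∧ h ω = w)
      * cpr P (fun ω => g ω = v) (fun ω => h ω = w) * pr P (fun ω => h ω = w) := by
  simp only [expec_eq_sum_cexp_mul_pr hP X fun ω => (g ω, h ω), Fintype.sum_prod_type,
    Prod.mk.injEq, mul_assoc, cpr_mul_pr hP]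

end FiniteProbability

section Mediation

variable {Lt Mt At : Type*} {Ω : Type} [Fintype Ω] {P : Ω → ℝ} {L : Ω → Lt} {A : Ω → At}
  {M Ma Ma' MI : Ω → Mt} {Y Ya Ya' YI : Ω → ℝ} {a a' : At}

/-- The identifiability conditions for one arm `a` of a treatment with arbitrarily many values:
consistency of the counterfactuals `Ma = M^a` and `Ya = Y^a`, positivity of the treatment value `a`,
and exchangeability. Independence is only required of the event `A = a`. -/
structure IsIdentifiableArm (P : Ω → ℝ) (L : Ω → Lt) (A : Ω → At) (M : Ω → Mt) (Y : Ω → ℝ)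
    (a : At) (Ma : Ω → Mt) (Ya : Ω → ℝ) : Prop where
  mediator_eq : ∀ ω, A ω = a → Ma ω = M ω
  outcome_eq : ∀ ω, A ω = a → Ya ω = Y ω
  pos : ∀ l, 0 < pr P (fun ω => L ω = l) → 0 < cpr P (fun ω => A ω = a) (fun ω => L ω = l)
  exchangeable : ∀ m y l,
    cpr P (fun ω => Ma ω = m ∧ Ya ω = y ∧ A ω = a) (fun ω => L ω = l)
      = cpr P (fun ω => Ma ω = m ∧ Ya ω = y) (fun ω => L ω = l)
        * cpr P (fun ω => A ω = a) (fun ω => L ω = l)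

/-- The organic-intervention conditions: given `L`, the mediator `MI = M^{a,I}` is distributed as
`Ma' = M^{a'}`, and the outcome `YI = Y^{a,I}` has the same regression on its mediator as `Ya = Y^a`
has on `Ma = M^a`. The regressions are compared only where both conditioning events have positive
probability, so that neither `cexp` is the junk value `x / 0 = 0`. -/
structure IsOrganicIntervention (P : Ω → ℝ) (L : Ω → Lt) (Ma' Ma : Ω → Mt) (Ya : Ω → ℝ)
    (MI : Ω → Mt) (YI : Ω → ℝ) : Prop where
  mediator_law : ∀ m l, 0 < pr P (fun ω => L ω = l) →
    cpr P (fun ω => MI ω = m) (fun ω => L ω = l) = cpr P (fun ω => Ma' ω = m) (fun ω => L ω = l)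
  outcome_mean : ∀ m l, 0 < pr P (fun ω => L ω = l) →
    0 < cpr P (fun ω => MI ω = m) (fun ω => L ω = l) →
    0 < cpr P (fun ω => Ma ω = m) (fun ω => L ω = l) →
    cexp P YI (fun ω => MI ω = m ∧ L ω = l) = cexp P Ya (fun ω => Ma ω = m ∧ L ω = l)

/-- The mediation functional
`θ(a, a') = Σ_m Σ_l E[Y | M=m, A=a, L=l] · P(M=m | A=a', L=l) · P(L=l)`: the mean outcome
in arm `a` when the mediator follows its law in arm `a'`. -/
def crossArmMean [Fintype Lt] [Fintype Mt] (P : Ω → ℝ) (L : Ω → Lt) (A : Ω → At) (M : Ω → Mt)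
    (Y : Ω → ℝ) (a a' : At) : ℝ :=
  ∑ m, ∑ l, cexp P Y (fun ω => M ω = m ∧ A ω = a ∧ L ω = l)
    * cpr P (fun ω => M ω = m) (fun ω => A ω = a' ∧ L ω = l) * pr P (fun ω => L ω = l)

theorem medForm_eq_crossArmMean_sub {Lt Mt : Type} [Fintype Lt] [Fintype Mt] (P : Ω → ℝ)
    (L : Ω → Lt) (A : Ω → Fin 2) (M : Ω → Mt) (Y : Ω → ℝ) :
    medForm P L A M Y = crossArmMean P L A M Y 1 0 - crossArmMean P L A M Y 0 0 := by
  simp only [medForm, crossArmMean, sub_mul, Finset.sum_sub_distrib]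

namespace IsIdentifiableArm

variable {l : Lt}

theorem cexp_counterfactual_eq (h : IsIdentifiableArm P L A M Y a Ma Ya)
    (hl : 0 < pr P fun ω => L ω = l) (f : Mt × ℝ → ℝ) :
    cexp P (fun ω => f (Ma ω, Ya ω)) (fun ω => A ω = a ∧ L ω = l)
      = cexp P (fun ω => f (Ma ω, Ya ω)) (fun ω => L ω = l) := by
  refine cexp_comp_congr (g := fun ω => (Ma ω, Ya ω)) (fun ⟨m, y⟩ => ?_) f
  apply cpr_and_right_of_condIndep (h.pos l hl).ne'
  simpa only [Prod.mk.injEq, and_assoc] using h.exchangeable m y l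

theorem cpr_counterfactual_mediator_eq (h : IsIdentifiableArm P L A M Y a Ma Ya)
    (hl : 0 < pr P fun ω => L ω = l) (m : Mt) :
    cpr P (fun ω => Ma ω = m) (fun ω => A ω = a ∧ L ω = l)
      = cpr P (fun ω => Ma ω = m) (fun ω => L ω = l) := by
  simpa only [cpr_eq_cexp_ite] using
    h.cexp_counterfactual_eq hl fun v => if v.1 = m then 1 else 0

theorem cpr_mediator_eq (h : IsIdentifiableArm P L A M Y a Ma Ya)
    (hl : 0 < pr P fun ω => L ω = l) (m : Mt) :
    cpr P (fun ω => M ω = m) (fun ω => A ω = a ∧ L ω = l)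
      = cpr P (fun ω => Ma ω = m) (fun ω => L ω = l) := by
  rw [← h.cpr_counterfactual_mediator_eq hl m, cpr_eq_cexp_ite, cpr_eq_cexp_ite]
  exact cexp_congr (fun _ => Iff.rfl) fun ω hω => by rw [h.mediator_eq ω hω.1]

theorem cexp_outcome_eq (h : IsIdentifiableArm P L A M Y a Ma Ya)
    (hl : 0 < pr P fun ω => L ω = l) (m : Mt) :
    cexp P Y (fun ω => M ω = m ∧ A ω = a ∧ L ω = l)
      = cexp P Ya (fun ω => Ma ω = m ∧ L ω = l) := by
  have hal : pr P (fun ω => A ω = a ∧ L ω = l) ≠ 0 :=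
    pr_and_ne_zero_of_cpr_ne_zero (h.pos l hl).ne'
  calc cexp P Y (fun ω => M ω = m ∧ A ω = a ∧ L ω = l)
      = cexp P Ya (fun ω => Ma ω = m ∧ A ω = a ∧ L ω = l) :=
        cexp_congr (fun ω => and_congr_left fun hω => by rw [h.mediator_eq ω hω.1])
          fun ω hω => (h.outcome_eq ω hω.2.1).symm
    _ = cexp P (fun ω => if Ma ω = m then Ya ω else 0) (fun ω => A ω = a ∧ L ω = l)
          / cpr P (fun ω => Ma ω = m) (fun ω => A ω = a ∧ L ω = l) := cexp_and hal _ _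
    _ = cexp P (fun ω => if Ma ω = m then Ya ω else 0) (fun ω => L ω = l)
          / cpr P (fun ω => Ma ω = m) (fun ω => L ω = l) :=
        congrArg₂ _ (h.cexp_counterfactual_eq hl fun v => if v.1 = m then v.2 else 0)
          (h.cpr_counterfactual_mediator_eq hl m)
    _ = cexp P Ya (fun ω => Ma ω = m ∧ L ω = l) := (cexp_and hl.ne' _ _).symm

end IsIdentifiableArm

theorem IsOrganicIntervention.refl (P : Ω → ℝ) (L : Ω → Lt) (Ma : Ω → Mt) (Ya : Ω → ℝ) :
    IsOrganicIntervention P L Ma Ma Ya Ma Ya :=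
  ⟨fun _ _ _ => rfl, fun _ _ _ _ _ => rfl⟩

variable [Fintype Lt] [Fintype Mt]

theorem IsOrganicIntervention.expec_eq_crossArmMean (hP : ∀ ω, 0 ≤ P ω)
    (hI : IsOrganicIntervention P L Ma' Ma Ya MI YI)
    (ha : IsIdentifiableArm P L A M Y a Ma Ya) (ha' : IsIdentifiableArm P L A M Y a' Ma' Ya')
    (hoverlap : ∀ m l, 0 < pr P (fun ω => L ω = l) →
      0 < cpr P (fun ω => M ω = m) (fun ω => A ω = a' ∧ L ω = l) →
      0 < cpr P (fun ω => M ω = m) (fun ω => A ω = a ∧ L ω = l)) :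
    expec P YI = crossArmMean P L A M Y a a' := by
  rw [expec_eq_sum_cexp_mul_cpr_mul_pr hP YI MI L, crossArmMean]
  refine Finset.sum_congr rfl fun m _ => Finset.sum_congr rfl fun l _ => ?_
  rcases (pr_nonneg hP fun ω => L ω = l).eq_or_lt' with hl | hl
  · rw [hl, mul_zero, mul_zero]
  have hlaw : cpr P (fun ω => MI ω = m) (fun ω => L ω = l)
      = cpr P (fun ω => M ω = m) (fun ω => A ω = a' ∧ L ω = l) :=
    (hI.mediator_law m l hl).trans (ha'.cpr_mediator_eq hl m).symm
  rw [← hlaw]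
  rcases (cpr_nonneg hP (fun ω => MI ω = m) fun ω => L ω = l).eq_or_lt' with hm | hm
  · rw [hm, mul_zero, mul_zero]
  have hMa : 0 < cpr P (fun ω => Ma ω = m) (fun ω => L ω = l) :=
    ha.cpr_mediator_eq hl m ▸ hoverlap m l hl (hlaw ▸ hm)
  rw [hI.outcome_mean m l hl hm hMa, ha.cexp_outcome_eq hl m]

theorem mediation_formula_identifies_organic_de_general (hP : ∀ ω, 0 ≤ P ω)
    (hI : IsOrganicIntervention P L Ma' Ma Ya MI YI)
    (ha : IsIdentifiableArm P L A M Y a Ma Ya) (ha' : IsIdentifiableArm P L A M Y a' Ma' Ya')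
    (hoverlap : ∀ m l, 0 < pr P (fun ω => L ω = l) →
      0 < cpr P (fun ω => M ω = m) (fun ω => A ω = a' ∧ L ω = l) →
      0 < cpr P (fun ω => M ω = m) (fun ω => A ω = a ∧ L ω = l)) :
    expec P YI - expec P Ya' = crossArmMean P L A M Y a a' - crossArmMean P L A M Y a' a' := by
  rw [hI.expec_eq_crossArmMean hP ha ha' hoverlap,
    (IsOrganicIntervention.refl P L Ma' Ya').expec_eq_crossArmMean hP ha' ha' fun _ _ _ => id]

end Mediation

/-- The mediation formula identifies the organic direct effect:
under consistency, positivity, exchangeability, and the organic-intervention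
conditions on `(M^{1,I}, Y^{1,I})`, one has `E[Y^{1,I}] − E[Y^0] = Ψ(P)`. -/
theorem mediation_formula_identifies_organic_de
    (Ω Lt Mt : Type) [Fintype Ω] [Fintype Lt] [Fintype Mt]
    (P : Ω → ℝ) (hP0 : ∀ ω, 0 ≤ P ω) (hP1 : (∑ ω, P ω) = 1)
    (Lv : Ω → Lt) (A : Ω → Fin 2) (M : Ω → Mt) (Y : Ω → ℝ)
    (Mc : Fin 2 → Ω → Mt) (Yc : Fin 2 → Ω → ℝ)
    -- mediator and outcome under treatment value 1 combined with the organic intervention I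
    (MI : Ω → Mt) (YI : Ω → ℝ)
    -- consistency
    (hconsM : ∀ (a : Fin 2) (ω : Ω), A ω = a → Mc a ω = M ω)
    (hconsY : ∀ (a : Fin 2) (ω : Ω), A ω = a → Yc a ω = Y ω)
    -- positivity
    (hpos : ∀ l : Lt, 0 < pr P (fun ω => Lv ω = l) → ∀ (a : Fin 2) (m : Mt),
      0 < cpr P (fun ω => A ω = a) (fun ω => Lv ω = l) ∧
      0 < cpr P (fun ω => M ω = m) (fun ω => A ω = a ∧ Lv ω = l))
    -- exchangeability: for each a, (M^a, Y^a) ⟂ A given L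
    (hexch : ∀ (a : Fin 2) (mv : Mt) (y : ℝ) (l : Lt) (a' : Fin 2),
      cpr P (fun ω => Mc a ω = mv ∧ Yc a ω = y ∧ A ω = a') (fun ω => Lv ω = l)
        = cpr P (fun ω => Mc a ω = mv ∧ Yc a ω = y) (fun ω => Lv ω = l)
          * cpr P (fun ω => A ω = a') (fun ω => Lv ω = l))
    -- organic-intervention conditions
    (horg1 : ∀ (m : Mt) (l : Lt), 0 < pr P (fun ω => Lv ω = l) →
      cpr P (fun ω => MI ω = m) (fun ω => Lv ω = l)
        = cpr P (fun ω => Mc 0 ω = m) (fun ω => Lv ω = l))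
    (horg2 : ∀ (m : Mt) (l : Lt), 0 < pr P (fun ω => Lv ω = l) →
      cexp P YI (fun ω => MI ω = m ∧ Lv ω = l)
        = cexp P (Yc 1) (fun ω => Mc 1 ω = m ∧ Lv ω = l)) :
    expec P YI - expec P (Yc 0) = medForm P Lv A M Y := by
  obtain ⟨ω, -, -⟩ := Finset.exists_ne_zero_of_sum_ne_zero (hP1.trans_ne one_ne_zero)
  have harm (a : Fin 2) : IsIdentifiableArm P Lv A M Y a (Mc a) (Yc a) :=
    ⟨hconsM a, hconsY a, fun l hl => (hpos l hl a (M ω)).1, fun m y l => hexch a m y l a⟩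
  have horg : IsOrganicIntervention P Lv (Mc 0) (Mc 1) (Yc 1) MI YI :=
    ⟨horg1, fun m l hl _ _ => horg2 m l hl⟩
  rw [medForm_eq_crossArmMean_sub]
  exact mediation_formula_identifies_organic_de_general hP0 horg (harm 1) (harm 0)
    fun m l hl _ => (hpos l hl 1 m).2
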